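/- arXiv:math/0210028 — 2 statements merged into one kernel-verified Lean document; each statement's English description precedes it below -/
import Mathlib

section
/- Let z_1, z_2, z_3 ∈ ℂ be pairwise non-colliding on the cylinder of radius 1 (sin((z_k − z_l)/2) ≠ 0 for k ≠ l) and let Γ_1, Γ_2, Γ_3 ∈ ℝ with Γ_2 ≠ 0. If Γ_1 cot((z_3 − z_1)/2) + Γ_2 cot((z_3 − z_2)/2) = 0 (z_3 sits at a stagnation point of the field of z_1, z_2) and Γ_2 cot((z_1 − z_2)/2) + Γ_3 cot((z_1 − z_3)/2) = 0 (Γ_3 is adjusted to immobilize z_1), then automatically Γ_3 cot((z_2 − z_3)/2) + Γ_1 cot((z_2 − z_1)/2) = 0, i.e. z_2 is also immobilized and the three vortices form an equilibrium. -/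
/-!
Weighting the velocity of each vortex by its own vorticity makes the mutual influences cancel in
pairs, because the kernel `cot (z / 2)` is odd: `∑ k, Γ k • v k = 0`. If all vortices but one are at
rest, only one term of this sum is left, and a vortex of nonzero vorticity is then at rest too.
-/

theorem sum_offDiag_eq_zero_of_antisymm {ι M : Type*} [AddCommGroup M]
    (s : Finset ι) (F : ι → ι → M) (antisymm : ∀ k l, F l k = -F k l) :
    ∑ p ∈ s.offDiag, F p.1 p.2 = 0 := by
  refine Finset.sum_involution (fun p _ ↦ p.swap) ?pair_cancels ?no_fixed_pair ?swap_mem ?swap_swap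
  case pair_cancels => exact fun p _ ↦ by simp [antisymm p.1 p.2]
  case no_fixed_pair =>
    exact fun p hp _ swap_eq ↦ (Finset.mem_offDiag.mp hp).2.2 (congrArg Prod.snd swap_eq)
  case swap_mem => exact fun p hp ↦ by simp_all [Finset.mem_offDiag, eq_comm]
  case swap_swap => exact fun p _ ↦ p.swap_swap

section InducedVelocity

variable {ι G R M : Type*} [Fintype ι] [DecidableEq ι] [AddGroup G]
  [CommSemiring R] [AddCommGroup M] [Module R M]

/-- The velocity of the `k`-th of finitely many vortices at positions `z` with vorticities `Γ`,
induced by all the others through the interaction kernel `K`. On the cylinder of radius 1 the kernel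
is `cot (z / 2)`, and the velocity is taken up to conjugation and a constant factor. -/
def inducedVelocity (K : G → M) (Γ : ι → R) (z : ι → G) (k : ι) : M :=
  ∑ l ∈ Finset.univ.erase k, Γ l • K (z k - z l)

theorem inducedVelocity_fin_three (K : G → M) (Γ : Fin 3 → R) (z : Fin 3 → G) (k : Fin 3) :
    inducedVelocity K Γ z k
      = Γ (k + 1) • K (z k - z (k + 1)) + Γ (k + 2) • K (z k - z (k + 2)) := by
  have others : Finset.univ.erase k = {k + 1, k + 2} := by decide +revert
  rw [inducedVelocity, others, Finset.sum_pair (by simp)]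

theorem sum_smul_inducedVelocity_eq_zero {K : G → M} (hK : Function.Odd K) (Γ : ι → R)
    (z : ι → G) : ∑ k, Γ k • inducedVelocity K Γ z k = 0 := by
  have antisymm (k l : ι) :
      Γ l • Γ k • K (z l - z k) = -(Γ k • Γ l • K (z k - z l)) := by
    rw [← neg_sub (z k), hK, smul_neg, smul_neg, smul_comm]
  calc ∑ k, Γ k • inducedVelocity K Γ z k
      = ∑ k, ∑ l ∈ Finset.univ.erase k, Γ k • Γ l • K (z k - z l) := by
        simp only [inducedVelocity, Finset.smul_sum]
    _ = ∑ p ∈ Finset.univ.offDiag, Γ p.1 • Γ p.2 • K (z p.1 - z p.2) :=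
        (Finset.sum_finset_product' _ _ _ fun p ↦ by simp [eq_comm]).symm
    _ = 0 := sum_offDiag_eq_zero_of_antisymm _ (fun k l ↦ Γ k • Γ l • K (z k - z l)) antisymm

theorem third_vortex_automatically_immobilized_general [IsDomain R] [Module.IsTorsionFree R M]
    {K : G → M} (hK : Function.Odd K) {Γ : ι → R} {z : ι → G} {j : ι} (hΓ : Γ j ≠ 0)
    (others_at_rest : ∀ k ≠ j, inducedVelocity K Γ z k = 0) :
    inducedVelocity K Γ z j = 0 := by
  have only_j_contributes : ∑ k, Γ k • inducedVelocity K Γ z k = Γ j • inducedVelocity K Γ z j :=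
    Fintype.sum_eq_single j fun k hk ↦ by rw [others_at_rest k hk, smul_zero]
  have weighted_eq_zero : Γ j • inducedVelocity K Γ z j = 0 :=
    only_j_contributes.symm.trans (sum_smul_inducedVelocity_eq_zero hK Γ z)
  exact (smul_eq_zero_iff_right hΓ).mp weighted_eq_zero

end InducedVelocity

theorem odd_cot : Function.Odd Complex.cot := fun z ↦ by
  rw [Complex.cot, Complex.cot, Complex.cos_neg, Complex.sin_neg, div_neg]

/-- If the vortex `z₃` sits at a stagnation point of the field induced by `z₁, z₂`, and
the vorticity `Γ₃` is adjusted so as to immobilize `z₁`, then `z₂` is automatically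
immobilized as well: the three vortices form an equilibrium on the cylinder of radius 1. -/
theorem third_vortex_automatically_immobilized (z₁ z₂ z₃ : ℂ)
    (h12 : Complex.sin ((z₁ - z₂) / 2) ≠ 0)
    (h13 : Complex.sin ((z₁ - z₃) / 2) ≠ 0)
    (h23 : Complex.sin ((z₂ - z₃) / 2) ≠ 0)
    (Γ₁ Γ₂ Γ₃ : ℝ) (hΓ₂ : Γ₂ ≠ 0)
    (h1 : (Γ₁ : ℂ) * Complex.cot ((z₃ - z₁) / 2)
        + (Γ₂ : ℂ) * Complex.cot ((z₃ - z₂) / 2) = 0)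
    (h2 : (Γ₂ : ℂ) * Complex.cot ((z₁ - z₂) / 2)
        + (Γ₃ : ℂ) * Complex.cot ((z₁ - z₃) / 2) = 0) :
    (Γ₃ : ℂ) * Complex.cot ((z₂ - z₃) / 2)
      + (Γ₁ : ℂ) * Complex.cot ((z₂ - z₁) / 2) = 0 := by
  have velocity := inducedVelocity_fin_three (Complex.cot ∘ (· / 2)) ![Γ₁, Γ₂, Γ₃] ![z₁, z₂, z₃]
  exact (velocity 1).symm.trans <| third_vortex_automatically_immobilized_general
    (odd_cot.comp_odd fun z ↦ neg_div 2 z) hΓ₂ fun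
      | 0, _ => (velocity 0).trans h2
      | 2, _ => (velocity 2).trans h1
end

section
/- (Critical separation for leapfrogging on a cylinder; cylindrical version of Love's criterion.) Let b > 0 and define F(ξ,η) = ( (sin²ξ + sinh²b)/(sin²ξ + sinh²η) ) · | sinh(b + η) sinh(b − η) | for (ξ,η) ∈ ℝ², η ≠ ±b... Then there exists a unique ρ ∈ (0, b) with F(0, ρ) = F(π/2, 0), and it is characterized by √2 · tanh ρ = tanh b. -/
/-- The exponentiated reduced Hamiltonian `exp(2πH/Γ²)` of four leapfrogging vortices
with vorticities `Γ, Γ, −Γ, −Γ` at `ib ± ζ`, `−ib ∓ conj ζ` on the cylinder of radius 1,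
as a function of `ζ = ξ + iη`. -/
noncomputable def leapfrogF (b ξ η : ℝ) : ℝ :=
  ((Real.sin ξ ^ 2 + Real.sinh b ^ 2) / (Real.sin ξ ^ 2 + Real.sinh η ^ 2))
    * |Real.sinh (b + η) * Real.sinh (b - η)|

/-!
The saddle level is `F(π/2, 0) = (cosh b sinh b)²`, and on the axis `ξ = 0` one has
`F(0, η) / F(π/2, 0) = |tanh² b / tanh² η - 1|`. As `tanh b ≠ 0`, this ratio is `1` exactly when
`2 tanh² η = tanh² b`; for `b, η > 0` that says `√2 tanh η = tanh b`, whose only solution is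
`η = artanh (tanh b / √2)`, and this solution lies below `b` because `tanh` is increasing.
-/

section Tanh

open Real

theorem tanh_ne_zero_of_ne_zero {x : ℝ} (hx : x ≠ 0) : tanh x ≠ 0 :=
  fun h => hx (tanh_injective (h.trans tanh_zero.symm))

theorem tanh_pos_of_pos {x : ℝ} (hx : 0 < x) : 0 < tanh x := by
  rw [tanh_eq_sinh_div_cosh]
  exact div_pos (sinh_pos_iff.2 hx) (cosh_pos x)

theorem sinh_add_mul_sinh_sub (x y : ℝ) :
    sinh (x + y) * sinh (x - y) =
      (cosh x * cosh y) ^ 2 * (tanh x ^ 2 - tanh y ^ 2) := by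
  have hx := (cosh_pos x).ne'
  have hy := (cosh_pos y).ne'
  rw [sinh_add, sinh_sub, tanh_eq_sinh_div_cosh, tanh_eq_sinh_div_cosh]
  field_simp
  ring

theorem tanh_div_mem_Ioo {c : ℝ} (hc : 1 ≤ c) (x : ℝ) : tanh x / c ∈ Set.Ioo (-1) 1 := by
  have hc₀ : 0 < c := zero_lt_one.trans_le hc
  rw [Set.mem_Ioo, lt_div_iff₀ hc₀, div_lt_iff₀ hc₀]
  constructor <;> linarith [neg_one_lt_tanh x, tanh_lt_one x]

theorem mul_tanh_eq_tanh_iff {c : ℝ} (hc : 1 ≤ c) (x y : ℝ) :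
    c * tanh x = tanh y ↔ x = artanh (tanh y / c) := by
  have hc₀ : c ≠ 0 := (zero_lt_one.trans_le hc).ne'
  rw [← tanh_injective.eq_iff (b := artanh _), tanh_artanh (tanh_div_mem_Ioo hc y),
    eq_div_iff hc₀, mul_comm]

theorem artanh_tanh_div_mem_Ioo {c x : ℝ} (hc : 1 < c) (hx : 0 < x) :
    artanh (tanh x / c) ∈ Set.Ioo 0 x := by
  have htanh : 0 < tanh x := tanh_pos_of_pos hx
  have hlt : tanh x / c < tanh x := div_lt_self htanh hc
  have hmem := tanh_div_mem_Ioo hc.le x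
  constructor
  · exact artanh_pos ⟨div_pos htanh (zero_lt_one.trans hc), hmem.2⟩
  · calc
      artanh (tanh x / c) < artanh (tanh x) := artanh_lt_artanh hmem.1 (tanh_lt_one x) hlt
      _ = x := artanh_tanh x

end Tanh

section LeapfrogF

open Real

variable {b η : ℝ}

theorem leapfrogF_pi_div_two_zero (b : ℝ) : leapfrogF b (π / 2) 0 = (cosh b * sinh b) ^ 2 := by
  simp only [leapfrogF, sin_pi_div_two, sinh_zero, add_zero, sub_zero, abs_mul_self]
  rw [mul_pow, cosh_sq b]
  ring

theorem leapfrogF_zero_eq_mul_abs (b : ℝ) (hη : η ≠ 0) :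
    leapfrogF b 0 η = (cosh b * sinh b) ^ 2 * |tanh b ^ 2 / tanh η ^ 2 - 1| := by
  have hsinh : sinh η ≠ 0 := sinh_ne_zero.2 hη
  have htanh : tanh η ≠ 0 := tanh_ne_zero_of_ne_zero hη
  have hcosh : cosh η ≠ 0 := (cosh_pos η).ne'
  have hfactor : tanh b ^ 2 - tanh η ^ 2 = tanh η ^ 2 * (tanh b ^ 2 / tanh η ^ 2 - 1) := by
    field_simp
  rw [leapfrogF, sinh_add_mul_sinh_sub, hfactor, abs_mul, abs_mul, abs_sq, abs_sq, sin_zero,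
    tanh_eq_sinh_div_cosh η]
  field_simp
  ring

theorem leapfrogF_zero_eq_saddle_iff_two_mul_tanh_sq (hb : b ≠ 0) (hη : η ≠ 0) :
    leapfrogF b 0 η = leapfrogF b (π / 2) 0 ↔ 2 * tanh η ^ 2 = tanh b ^ 2 := by
  have hlevel : (cosh b * sinh b) ^ 2 ≠ 0 :=
    pow_ne_zero 2 (mul_ne_zero (cosh_pos b).ne' (sinh_ne_zero.2 hb))
  have htanhη : tanh η ^ 2 ≠ 0 := pow_ne_zero 2 (tanh_ne_zero_of_ne_zero hη)
  have hratio : tanh b ^ 2 / tanh η ^ 2 ≠ 0 :=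
    div_ne_zero (pow_ne_zero 2 (tanh_ne_zero_of_ne_zero hb)) htanhη
  calc
    leapfrogF b 0 η = leapfrogF b (π / 2) 0 ↔ |tanh b ^ 2 / tanh η ^ 2 - 1| = 1 := by
      rw [leapfrogF_zero_eq_mul_abs b hη, leapfrogF_pi_div_two_zero, mul_eq_left₀ hlevel]
    _ ↔ tanh b ^ 2 / tanh η ^ 2 = 2 := by
      rw [abs_eq zero_le_one, sub_eq_iff_eq_add, sub_eq_iff_eq_add, neg_add_cancel,
        or_iff_left hratio, one_add_one_eq_two]
    _ ↔ 2 * tanh η ^ 2 = tanh b ^ 2 := by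
      rw [div_eq_iff htanhη, eq_comm]

theorem leapfrogF_zero_eq_saddle_iff_sqrt_two_mul_tanh (hb : 0 < b) (hη : 0 < η) :
    leapfrogF b 0 η = leapfrogF b (π / 2) 0 ↔ √2 * tanh η = tanh b := by
  have htanhb := tanh_pos_of_pos hb
  have htanhη := tanh_pos_of_pos hη
  rw [leapfrogF_zero_eq_saddle_iff_two_mul_tanh_sq hb.ne' hη.ne',
    ← sq_eq_sq₀ (by positivity) htanhb.le, mul_pow, sq_sqrt zero_le_two]

theorem love_criterion_on_cylinder_general (hb : 0 < b) :
    ∃ ρ₀ ∈ Set.Ioo 0 b, ∀ ρ, 0 < ρ →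
      (leapfrogF b 0 ρ = leapfrogF b (π / 2) 0 ↔ ρ = ρ₀) ∧
      (leapfrogF b 0 ρ = leapfrogF b (π / 2) 0 ↔ √2 * tanh ρ = tanh b) := by
  refine ⟨artanh (tanh b / √2), artanh_tanh_div_mem_Ioo one_lt_sqrt_two hb, fun ρ hρ => ?_⟩
  have hlevel := leapfrogF_zero_eq_saddle_iff_sqrt_two_mul_tanh hb hρ
  exact ⟨hlevel.trans (mul_tanh_eq_tanh_iff one_lt_sqrt_two.le ρ b), hlevel⟩

end LeapfrogF

/-- The cylindrical version of Love's criterion: there is a unique `ρ ∈ (0,b)` at which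
the level of `F` through `(0,ρ)` equals the separatrix (saddle) level `F(π/2, 0)`, and it
is characterized by `√2 tanh ρ = tanh b`. -/
theorem love_criterion_on_cylinder (b : ℝ) (hb : 0 < b) :
    (∃! ρ : ℝ, ρ ∈ Set.Ioo 0 b ∧ leapfrogF b 0 ρ = leapfrogF b (Real.pi / 2) 0) ∧
    (∀ ρ ∈ Set.Ioo 0 b,
      (leapfrogF b 0 ρ = leapfrogF b (Real.pi / 2) 0 ↔
        Real.sqrt 2 * Real.tanh ρ = Real.tanh b)) := by
  obtain ⟨ρ₀, hρ₀, h⟩ := love_criterion_on_cylinder_general hb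
  exact ⟨⟨ρ₀, ⟨hρ₀, (h ρ₀ hρ₀.1).1.2 rfl⟩, fun ρ hρ => (h ρ hρ.1.1).1.1 hρ.2⟩,
    fun ρ hρ => (h ρ hρ.1).2⟩
end
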